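/- Let h̃₀(x,ξ) := −Σ_{η∈ℤ^d} ã_η(x) cosh(η·ξ) − V₀(x) with ã and V₀ as follows: each ã_η smooth, ã_η(x) ≤ 0 for η ≠ 0, ã_η(x) = ã_{−η}(x), span{η : ã_η(x) < 0} = ℝ^d, Σ_η e^{c|η|} sup_{x∈K}|∂_x^β ã_η(x)| < ∞ for all c > 0, compact K, multi-index β; V₀ ∈ C^∞(ℝ^d), V₀ ≥ 0 with V₀(x) = 0 only at x = 0. Let ℓ be the Finsler function of h̃₀ at energy 0 (ℓ(x,v) = ξ_{h̃₀}(x, λ(x,v)v)·v with ξ_{h̃₀}(x,·) = (∇_ξ h̃₀(x,·))^{-1} and λ(x,v) > 0 unique with h̃₀(x, ξ_{h̃₀}(x, λ(x,v)v)) = 0). Let Ω ⊂ ℝ^d \ {0} be open and φ ∈ C^∞(Ω) solve the eikonal equation h̃₀(x, ∇φ(x)) = 0 for all x ∈ Ω. Let γ₀ : [−T, 0] → Ω be a C¹ curve with γ̇₀(t) = ∇_ξ h̃₀(γ₀(t), ∇φ(γ₀(t))) and γ̇₀(t) ≠ 0 for all t. Then φ(γ₀(0)) − φ(γ₀(−T))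 = ∫_{−T}^0 ℓ(γ₀(t), γ̇₀(t)) dt. -/

import Mathlib

open scoped RealInnerProductSpace Classical
noncomputable section

/-- `ℝ^d` as a Euclidean space. -/
abbrev Ed (d : ℕ) := EuclideanSpace ℝ (Fin d)

/-- The lattice vector `η ∈ ℤ^d` regarded as a vector of `ℝ^d`. -/
def zv {d : ℕ} (η : Fin d → ℤ) : Ed d :=
  (EuclideanSpace.equiv (Fin d) ℝ).symm (fun i => (η i : ℝ))

theorem grad_ineq {E : Type*} [NormedAddCommGroup E] [InnerProductSpace ℝ E] [CompleteSpace E]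
    (f : E → ℝ) (hf : ConvexOn ℝ Set.univ f) (p q g : E) (hg : HasGradientAt f g p) :
    f p + ⟪g, q - p⟫ ≤ f q := by
  have hline : ConvexOn ℝ Set.univ (fun t : ℝ => f (AffineMap.lineMap p q t)) := by
    have := hf.comp_affineMap (AffineMap.lineMap p q : ℝ →ᵃ[ℝ] E)
    rw [Set.preimage_univ] at this
    exact this
  have hd : HasDerivAt (fun t : ℝ => f (AffineMap.lineMap p q t)) ⟪g, q - p⟫ 0 := by
    have h1 : HasDerivAt (fun t : ℝ => (AffineMap.lineMap p q t : E)) (q - p) 0 :=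
      AffineMap.hasDerivAt_lineMap
    have h2 : HasFDerivAt f (InnerProductSpace.toDual ℝ E g)
        ((fun t : ℝ => (AffineMap.lineMap p q t : E)) 0) := by
      simpa using hg.hasFDerivAt
    exact h2.comp_hasDerivAt (0 : ℝ) h1
  have := hline.le_slope_of_hasDerivAt (Set.mem_univ 0) (Set.mem_univ 1) zero_lt_one hd
  simp [slope_def_field] at this
  linarith

theorem hasGrad_of_ne {E : Type*} [NormedAddCommGroup E] [InnerProductSpace ℝ E] [CompleteSpace E]
    (f : E → ℝ) (p g : E) (hg : gradient f p = g) (h : g ≠ 0) : HasGradientAt f g p := by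
  by_cases hd : DifferentiableAt ℝ f p
  · rw [← hg]; exact hd.hasGradientAt
  · exact absurd (hg ▸ gradient_eq_zero_of_not_differentiableAt hd) h

theorem summ_aux (d : ℕ) (a : (Fin d → ℤ) → Ed d → ℝ)
    (hdecay : ∀ c : ℝ, 0 < c → ∀ K : Set (Ed d), IsCompact K → ∀ n : ℕ,
      ∃ M : (Fin d → ℤ) → ℝ,
        (∀ η : Fin d → ℤ, ∀ x ∈ K, ‖iteratedFDeriv ℝ n (a η) x‖ ≤ M η) ∧
        Summable (fun η : Fin d → ℤ => Real.exp (c * ‖zv η‖) * M η)) (x ξ : Ed d) :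
    Summable (fun η : Fin d → ℤ => a η x * Real.cosh ⟪zv η, ξ⟫) := by
  obtain ⟨M, hM, hs⟩ := hdecay (‖ξ‖ + 1) (by positivity) {x} isCompact_singleton 0
  refine Summable.of_norm_bounded hs fun η => ?_
  have h1 := hM η x rfl
  rw [norm_iteratedFDeriv_zero] at h1
  rw [norm_mul, mul_comm]
  refine mul_le_mul ?_ h1 (norm_nonneg _) (Real.exp_nonneg _)
  rw [Real.norm_eq_abs, abs_of_pos (Real.cosh_pos _), ← Real.cosh_abs, Real.cosh_eq]
  have h2 : |⟪zv η, ξ⟫| ≤ (‖ξ‖ + 1) * ‖zv η‖ := by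
    have := abs_real_inner_le_norm (zv η) ξ
    nlinarith [norm_nonneg (zv η)]
  have h3 := Real.exp_le_exp.2 h2
  have h4 : Real.exp (-|⟪zv η, ξ⟫|) ≤ Real.exp |⟪zv η, ξ⟫| :=
    Real.exp_le_exp.2 (by linarith [abs_nonneg ⟪zv η, ξ⟫])
  linarith

theorem convexOn_cosh_aux : ConvexOn ℝ Set.univ Real.cosh := by
  have h2 : ConvexOn ℝ Set.univ (fun x : ℝ => Real.exp (-x)) := by
    simpa [Function.comp_def] using convexOn_exp.comp_linearMap (-LinearMap.id : ℝ →ₗ[ℝ] ℝ)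
  have := (convexOn_exp.add h2).smul (c := (1/2 : ℝ)) (by norm_num)
  refine this.congr fun x _ => ?_
  simp [Real.cosh_eq]; ring

theorem convex_h0 (d : ℕ) (a : (Fin d → ℤ) → Ed d → ℝ) (x : Ed d) (c : ℝ)
    (hneg : ∀ η : Fin d → ℤ, η ≠ 0 → ∀ x : Ed d, a η x ≤ 0)
    (hs : ∀ ξ, Summable (fun η : Fin d → ℤ => a η x * Real.cosh ⟪zv η, ξ⟫)) :
    ConvexOn ℝ Set.univ
      (fun ξ : Ed d => -(∑' η : Fin d → ℤ, a η x * Real.cosh ⟪zv η, ξ⟫) - c) := by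
  refine ⟨convex_univ, fun p _ q _ s t hs0 ht0 hst => ?_⟩
  have key : s * (∑' η : Fin d → ℤ, a η x * Real.cosh ⟪zv η, p⟫)
      + t * (∑' η : Fin d → ℤ, a η x * Real.cosh ⟪zv η, q⟫)
      ≤ ∑' η : Fin d → ℤ, a η x * Real.cosh ⟪zv η, s • p + t • q⟫ := by
    rw [← tsum_mul_left, ← tsum_mul_left,
      ← Summable.tsum_add ((hs p).mul_left s) ((hs q).mul_left t)]
    refine Summable.tsum_le_tsum (fun η => ?_)
      (((hs p).mul_left s).add ((hs q).mul_left t)) (hs _)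
    by_cases hη : η = 0
    · subst hη
      have : zv (0 : Fin d → ℤ) = 0 := by
        ext i; simp [zv]
      simp only [this, inner_zero_left, Real.cosh_zero]
      apply le_of_eq
      linear_combination (a 0 x) * hst
    · have h1 := hneg η hη x
      have h2 := convexOn_cosh_aux.2 (Set.mem_univ ⟪zv η, p⟫) (Set.mem_univ ⟪zv η, q⟫) hs0 ht0 hst
      simp only [smul_eq_mul] at h2
      rw [inner_add_right, real_inner_smul_right, real_inner_smul_right]
      have := mul_le_mul_of_nonpos_left h2 h1
      linarith
  have hc : c = s * c + t * c := by linear_combination (-c) * hst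
  simp only [smul_eq_mul]
  linarith

/-- From the proof of Theorem 1.5: along a base integral curve `γ₀` of the Hamiltonian
vector field of `h̃₀` lying in the Lagrangian graph `{(x, ∇φ(x))}` inside the zero energy
shell (`φ` a smooth solution of the eikonal equation `h̃₀(x,∇φ(x)) = 0` on `Ω`), the
increment of `φ` equals the Finsler length: `φ(γ₀(0)) - φ(γ₀(-T)) = ∫ ℓ(γ₀, γ̇₀) dt`. -/
theorem stmt15 (d : ℕ) (a : (Fin d → ℤ) → Ed d → ℝ) (V₀ : Ed d → ℝ)
    (hsm : ∀ η : Fin d → ℤ, ContDiff ℝ (⊤ : ℕ∞) (a η))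
    (hneg : ∀ η : Fin d → ℤ, η ≠ 0 → ∀ x : Ed d, a η x ≤ 0)
    (heven : ∀ (η : Fin d → ℤ) (x : Ed d), a η x = a (-η) x)
    (hspan : ∀ x : Ed d,
      Submodule.span ℝ {w : Ed d | ∃ η : Fin d → ℤ, a η x < 0 ∧ w = zv η} = ⊤)
    (hdecay : ∀ c : ℝ, 0 < c → ∀ K : Set (Ed d), IsCompact K → ∀ n : ℕ,
      ∃ M : (Fin d → ℤ) → ℝ,
        (∀ η : Fin d → ℤ, ∀ x ∈ K, ‖iteratedFDeriv ℝ n (a η) x‖ ≤ M η) ∧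
        Summable (fun η : Fin d → ℤ => Real.exp (c * ‖zv η‖) * M η))
    (hVsm : ContDiff ℝ (⊤ : ℕ∞) V₀)
    (hVpos : ∀ x : Ed d, 0 ≤ V₀ x)
    (hVzero : ∀ x : Ed d, V₀ x = 0 ↔ x = 0)
    (h0 : Ed d → Ed d → ℝ)
    (hh0 : ∀ x ξ : Ed d,
      h0 x ξ = -(∑' η : Fin d → ℤ, a η x * Real.cosh ⟪zv η, ξ⟫) - V₀ x)
    (ξh : Ed d → Ed d → Ed d)
    (hξh1 : ∀ x v : Ed d, gradient (h0 x) (ξh x v) = v)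
    (hξh2 : ∀ x ξ : Ed d, ξh x (gradient (h0 x) ξ) = ξ)
    (lam : Ed d → Ed d → ℝ)
    (hlam : ∀ x : Ed d, x ≠ 0 → ∀ v : Ed d, v ≠ 0 →
      0 < lam x v ∧ h0 x (ξh x (lam x v • v)) = 0)
    (ℓ : Ed d → Ed d → ℝ)
    (hℓ : ∀ x v : Ed d,
      ℓ x v = if x = 0 ∨ v = 0 then 0 else ⟪ξh x (lam x v • v), v⟫)
    (Ω : Set (Ed d)) (hΩopen : IsOpen Ω) (hΩ0 : (0 : Ed d) ∉ Ω)
    (φ : Ed d → ℝ) (hφsm : ContDiffOn ℝ (⊤ : ℕ∞) φ Ω)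
    (gφ : Ed d → Ed d)
    (hgφ : ∀ x ∈ Ω, HasGradientAt φ (gφ x) x)
    (heik : ∀ x ∈ Ω, h0 x (gφ x) = 0)
    (T : ℝ) (hT : 0 < T)
    (γ₀ : ℝ → Ed d)
    (hγC1 : ContDiffOn ℝ 1 γ₀ (Set.Icc (-T) 0))
    (hγΩ : ∀ t ∈ Set.Icc (-T) (0:ℝ), γ₀ t ∈ Ω)
    (hγflow : ∀ t ∈ Set.Icc (-T) (0:ℝ),
      HasDerivAt γ₀ (gradient (h0 (γ₀ t)) (gφ (γ₀ t))) t)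
    (hγreg : ∀ t ∈ Set.Icc (-T) (0:ℝ), gradient (h0 (γ₀ t)) (gφ (γ₀ t)) ≠ 0) :
    φ (γ₀ 0) - φ (γ₀ (-T))
      = ∫ t in (-T)..(0:ℝ), ℓ (γ₀ t) (gradient (h0 (γ₀ t)) (gφ (γ₀ t))) := by
  have hconv : ∀ x, ConvexOn ℝ Set.univ (h0 x) := fun x => by
    have := convex_h0 d a x (V₀ x) hneg (summ_aux d a hdecay x)
    rwa [← show h0 x = _ from funext (hh0 x)] at this
  have hkey : ∀ t ∈ Set.Icc (-T) (0:ℝ), ℓ (γ₀ t) (gradient (h0 (γ₀ t)) (gφ (γ₀ t)))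
      = ⟪gφ (γ₀ t), gradient (h0 (γ₀ t)) (gφ (γ₀ t))⟫ := by
    intro t ht
    have hΩt := hγΩ t ht
    have hv := hγreg t ht
    have hx : γ₀ t ≠ 0 := fun h => hΩ0 (h ▸ hΩt)
    have hz := heik _ hΩt
    generalize hxe : γ₀ t = x at *
    generalize hve : gradient (h0 x) (gφ x) = v at *
    obtain ⟨hl, hl0⟩ := hlam x hx v hv
    rw [hℓ, if_neg (by tauto)]
    have g1 := hasGrad_of_ne _ _ _ hve hv
    have g2 := hasGrad_of_ne _ _ _ (hξh1 x (lam x v • v)) (smul_ne_zero hl.ne' hv)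
    have i1 := grad_ineq _ (hconv x) _ (ξh x (lam x v • v)) _ g1
    have i2 := grad_ineq _ (hconv x) _ (gφ x) _ g2
    rw [hz, hl0, inner_sub_right] at i1
    rw [hz, hl0, real_inner_smul_left, inner_sub_right, zero_add] at i2
    have i3 := nonpos_of_mul_nonpos_right i2 hl
    rw [real_inner_comm v, real_inner_comm v]
    linarith
  have hder : ∀ t ∈ Set.Icc (-T) (0:ℝ), HasDerivAt (φ ∘ γ₀)
      (ℓ (γ₀ t) (gradient (h0 (γ₀ t)) (gφ (γ₀ t)))) t := by
    intro t ht
    rw [hkey t ht]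
    simpa using (hgφ _ (hγΩ t ht)).hasFDerivAt.comp_hasDerivAt t (hγflow t ht)
  have hT' : -T ≤ 0 := by linarith
  have hcd : ContDiffOn ℝ 1 (φ ∘ γ₀) (Set.Icc (-T) 0) :=
    (hφsm.of_le (by exact_mod_cast le_top)).comp hγC1 hγΩ
  have hud : UniqueDiffOn ℝ (Set.Icc (-T) (0:ℝ)) := uniqueDiffOn_Icc (by linarith)
  have hcont : ContinuousOn (fun t => ℓ (γ₀ t) (gradient (h0 (γ₀ t)) (gφ (γ₀ t))))
      (Set.Icc (-T) 0) :=
    (hcd.continuousOn_derivWithin hud le_rfl).congr fun t ht =>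
      ((hder t ht).hasDerivWithinAt.derivWithin (hud t ht)).symm
  rw [intervalIntegral.integral_eq_sub_of_hasDerivAt (f := φ ∘ γ₀)
    (by rw [Set.uIcc_of_le hT']; exact hder) (hcont.intervalIntegrable_of_Icc hT')]
  rfl
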